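/- Sequential composition right-distributes over nondeterministic choice up to simulation equivalence: for probabilistic automata P, Q, R with pairwise disjoint state spaces, P · R + Q · R ≡ (P + Q) · R (where on the left the two occurrences of R are taken as disjoint copies). -/

import Mathlib

open scoped ENNReal

namespace PCKA

/-- A probabilistic automaton over the (non-silent) action alphabet `α`, with state
space `σ`.  Transition labels are `Option α`, where `none` plays the role of the
silent action `τ`; `trans x a μ` means `x —a→ μ` where `μ` is a (countably
supported) probability distribution over states, `init` is the initial
distribution and `final` the set of final states. -/
structure PAut (α : Type) (σ : Type) where
  trans : σ → Option α → PMF σ → Prop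
  init : PMF σ
  final : Set σ

/-- The lifting `S̄ ⊆ D(X) × D(Y)` of a relation `S ⊆ X × D(Y)`: `μ S̄ ν` iff there
are weights `p n` summing to `1`, states `x n` and distributions `νs n` with
`μ = Σ_n p n · δ_{x n}`, `x n S νs n` for each `n`, and `ν = Σ_n p n · νs n`. -/
def Lift {X Y : Type} (S : X → PMF Y → Prop) (μ : PMF X) (ν : PMF Y) : Prop :=
  ∃ (p : ℕ → ℝ≥0∞) (x : ℕ → X) (νs : ℕ → PMF Y),
    (∑' n, p n) = 1 ∧
    (∀ s, μ s = ∑' n, p n * (PMF.pure (x n)) s) ∧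
    (∀ n, S (x n) (νs n)) ∧
    (∀ t, ν t = ∑' n, p n * (νs n) t)

/-- The double lifting `T̿ ⊆ D(X) × D(Z)` of a relation `T ⊆ X × Z`, via a weight
function `w`. -/
def DLift {X Z : Type} (T : X → Z → Prop) (μ : PMF X) (ψ : PMF Z) : Prop :=
  ∃ w : X → Z → ℝ≥0∞,
    (∀ x z, 0 < w x z → T x z) ∧
    (∀ x, (∑' z, w x z) = μ x) ∧
    (∀ z, (∑' x, w x z) = ψ z)

/-- Flattening `π : D(D(Y)) → D(Y)`, `π(ψ) = Σ_{ν} ψ(ν)·ν`. -/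
noncomputable def flat {Y : Type} (ψ : PMF (PMF Y)) : PMF Y := ψ.bind id

/-- Single transition step, with the τ-transitions extended by reflexivity
(`x —τ→ δ_x` is always allowed). -/
def step {α σ : Type} (P : PAut α σ) (a : Option α) (x : σ) (μ : PMF σ) : Prop :=
  P.trans x a μ ∨ (a = none ∧ μ = PMF.pure x)

/-- Weak internal moves `⇒`: the reflexive-transitive closure of the lifted
(extended) τ-transition relation on distributions. -/
def WeakTau {α σ : Type} (P : PAut α σ) : PMF σ → PMF σ → Prop :=
  Relation.ReflTransGen (Lift (step P none))

/-- Weak `a`-transition `μ ⇒^a μ'`: `μ ⇒ μ₁ —ā→ μ₂ ⇒ μ'`. -/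
def WeakStep {α σ : Type} (P : PAut α σ) (a : Option α) (μ μ' : PMF σ) : Prop :=
  ∃ μ₁ μ₂, WeakTau P μ μ₁ ∧ Lift (step P a) μ₁ μ₂ ∧ WeakTau P μ₂ μ'

/-- A probabilistic simulation from `P` to `Q` (Deng et al. style). -/
structure IsSimulation {α σ τ' : Type} (P : PAut α σ) (Q : PAut α τ')
    (S : σ → PMF τ' → Prop) : Prop where
  init : ∃ ν₀', WeakTau Q Q.init ν₀' ∧ Lift S P.init ν₀'
  step : ∀ x a μ', P.trans x a μ' → ∀ ν, S x ν →
    ∃ ν', WeakStep Q a ν ν' ∧ Lift S μ' ν'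
  final : ∀ x ν, x ∈ P.final → S x ν →
    ∃ ν', WeakTau Q ν ν' ∧ ∀ y ∈ ν'.support, y ∈ Q.final

/-- A probabilistic weak forward simulation from `P` to `Q` (Segala style). -/
structure IsWFSimulation {α σ τ' : Type} (P : PAut α σ) (Q : PAut α τ')
    (S : σ → PMF τ' → Prop) : Prop where
  init : ∃ ψ₀ : PMF (PMF τ'), DLift S P.init ψ₀ ∧ WeakTau Q Q.init (flat ψ₀)
  step : ∀ x a μ', P.trans x a μ' → ∀ ν, S x ν →
    ∃ ψ : PMF (PMF τ'), WeakStep Q a ν (flat ψ) ∧ DLift S μ' ψ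
  final : ∀ x ν, x ∈ P.final → S x ν →
    ∃ ψ : PMF (PMF τ'), (∀ ρ ∈ ψ.support, ∀ y ∈ ρ.support, y ∈ Q.final) ∧
      WeakTau Q ν (flat ψ)

/-- `P ≤ Q`: there exists a probabilistic simulation from `P` to `Q`. -/
def Sim {α σ τ' : Type} (P : PAut α σ) (Q : PAut α τ') : Prop :=
  ∃ S, IsSimulation P Q S

/-- Simulation equivalence `P ≡ Q`. -/
def SimEquiv {α σ τ' : Type} (P : PAut α σ) (Q : PAut α τ') : Prop :=
  Sim P Q ∧ Sim Q P

/-- Convex combination `p·μ + (1−p)·ν` of two distributions. -/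
noncomputable def mix {X : Type} (p : ℝ≥0∞) (hp : p ≤ 1) (μ ν : PMF X) : PMF X :=
  ⟨fun x => p * μ x + (1 - p) * ν x, by
    refine ENNReal.summable.hasSum_iff.mpr ?_
    rw [ENNReal.tsum_add, ENNReal.tsum_mul_left, ENNReal.tsum_mul_left,
      μ.tsum_coe, ν.tsum_coe, mul_one, mul_one, add_tsub_cancel_of_le hp]⟩

/-- Product distribution `μ × ν`, with `(μ × ν)(x,y) = μ(x)·ν(y)`. -/
noncomputable def pprod {X Y : Type} (μ : PMF X) (ν : PMF Y) : PMF (X × Y) :=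
  μ.bind fun x => ν.map fun y => (x, y)

/-- The skip automaton `1`: one state, no transitions, that state is final. -/
noncomputable def skip (α : Type) : PAut α Unit :=
  ⟨fun _ _ _ => False, PMF.pure (), Set.univ⟩

/-- The deadlock automaton `0`: one state, no transitions, no final state. -/
noncomputable def deadlock (α : Type) : PAut α Unit :=
  ⟨fun _ _ _ => False, PMF.pure (), ∅⟩

/-- Nondeterministic choice `P + Q`: disjoint union of the two automata (realised
by the sum type) plus a fresh initial state `z = none` with `z —τ→ μ₀` and
`z —τ→ ν₀`. -/
noncomputable def nchoice {α σ τ' : Type} (P : PAut α σ) (Q : PAut α τ') :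
    PAut α (Option (σ ⊕ τ')) where
  trans := fun s a μ =>
    match s with
    | none => a = none ∧
        (μ = P.init.map (fun x => some (Sum.inl x)) ∨
         μ = Q.init.map (fun y => some (Sum.inr y)))
    | some (Sum.inl x) => ∃ μ', P.trans x a μ' ∧ μ = μ'.map (fun x => some (Sum.inl x))
    | some (Sum.inr y) => ∃ ν', Q.trans y a ν' ∧ μ = ν'.map (fun y => some (Sum.inr y))
  init := PMF.pure none
  final := {s | (∃ x ∈ P.final, s = some (Sum.inl x)) ∨ (∃ y ∈ Q.final, s = some (Sum.inr y))}

/-- Sequential composition `P · Q`: disjoint union (realised by the sum type),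
with a τ-transition from each final state of `P` to the initial distribution of
`Q`; initial distribution that of `P`, final states those of `Q`. -/
noncomputable def pseq {α σ τ' : Type} (P : PAut α σ) (Q : PAut α τ') :
    PAut α (σ ⊕ τ') where
  trans := fun s a μ =>
    match s with
    | Sum.inl x =>
        (∃ μ', P.trans x a μ' ∧ μ = μ'.map Sum.inl) ∨
        (a = none ∧ x ∈ P.final ∧ μ = Q.init.map Sum.inr)
    | Sum.inr y => ∃ ν', Q.trans y a ν' ∧ μ = ν'.map Sum.inr
  init := P.init.map Sum.inl
  final := {s | ∃ y ∈ Q.final, s = Sum.inr y}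

/-- Kleene star `P*`: a fresh state `z = none` which is initial and the only
final state, with `z —τ→ μ₀` and `x —τ→ δ_z` for each final state `x` of `P`. -/
noncomputable def pstar {α σ : Type} (P : PAut α σ) : PAut α (Option σ) where
  trans := fun s a μ =>
    match s with
    | none => a = none ∧ μ = P.init.map some
    | some x =>
        (∃ μ', P.trans x a μ' ∧ μ = μ'.map some) ∨
        (a = none ∧ x ∈ P.final ∧ μ = PMF.pure none)
  init := PMF.pure none
  final := {none}

/-- Probabilistic choice `P ⊕_p Q`: disjoint union with initial distribution
`p·μ₀ + (1−p)·ν₀`. -/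
noncomputable def pchoice {α σ τ' : Type} (p : ℝ≥0∞) (hp : p ≤ 1)
    (P : PAut α σ) (Q : PAut α τ') : PAut α (σ ⊕ τ') where
  trans := fun s a μ =>
    match s with
    | Sum.inl x => ∃ μ', P.trans x a μ' ∧ μ = μ'.map Sum.inl
    | Sum.inr y => ∃ ν', Q.trans y a ν' ∧ μ = ν'.map Sum.inr
  init := mix p hp (P.init.map Sum.inl) (Q.init.map Sum.inr)
  final := {s | (∃ x ∈ P.final, s = Sum.inl x) ∨ (∃ y ∈ Q.final, s = Sum.inr y)}

/-- CSP-style parallel composition `P ∥_A Q` synchronising on the frame `A`: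
actions in `A` must be performed jointly, all other actions (including τ) are
interleaved. -/
noncomputable def par {α σ τ' : Type} (A : Set α) (P : PAut α σ) (Q : PAut α τ') :
    PAut α (σ × τ') where
  trans := fun s a μπ => ∃ μ ν, μπ = pprod μ ν ∧
    ((∃ b ∈ A, a = some b ∧ P.trans s.1 a μ ∧ Q.trans s.2 a ν) ∨
     ((∀ b ∈ A, a ≠ some b) ∧ P.trans s.1 a μ ∧ ν = PMF.pure s.2) ∨
     ((∀ b ∈ A, a ≠ some b) ∧ Q.trans s.2 a ν ∧ μ = PMF.pure s.1))
  init := pprod P.init Q.init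
  final := {s | s.1 ∈ P.final ∧ s.2 ∈ Q.final}

theorem exists_enum {X : Type} (μ : PMF X) :
    ∃ (q : PMF ℕ) (x : ℕ → X), q.map x = μ := by
  classical
  obtain ⟨e, he⟩ := (Set.countable_iff_exists_injOn).1 μ.support_countable
  obtain ⟨x₀, _⟩ := μ.support_nonempty
  haveI : Nonempty X := ⟨x₀⟩
  refine ⟨μ.map e, Function.invFunOn e μ.support, ?_⟩
  rw [PMF.map_comp]
  have h : ∀ s ∈ μ.support, (Function.invFunOn e μ.support ∘ e) s = s := fun s hs =>
    he.leftInvOn_invFunOn hs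
  ext t
  rw [PMF.map_apply, tsum_eq_single t]
  · by_cases ht : t ∈ μ.support
    · rw [if_pos (h t ht).symm]
    · rw [PMF.mem_support_iff, not_not] at ht
      simp [ht]
  · intro s hst
    by_cases hs : s ∈ μ.support
    · rw [h s hs, if_neg (Ne.symm hst)]
    · rw [PMF.mem_support_iff, not_not] at hs
      simp [hs]

theorem lift_map {X Y Z : Type} (S : Y → PMF Z → Prop) (μ : PMF X) (g : X → Y) (k : X → Z)
    (hS : ∀ x, S (g x) (PMF.pure (k x))) : Lift S (μ.map g) (μ.map k) := by
  obtain ⟨q, x, rfl⟩ := exists_enum μ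
  refine ⟨q, fun n => g (x n), fun n => PMF.pure (k (x n)), q.tsum_coe, ?_, fun n => hS _, ?_⟩
  · intro s
    rw [PMF.map_comp]
    rfl
  · intro s
    rw [PMF.map_comp]
    rfl

theorem lift_pure {X Y : Type} (S : X → PMF Y → Prop) (x : X) (ν : PMF Y) (h : S x ν) :
    Lift S (PMF.pure x) ν := by
  refine ⟨PMF.pure 0, fun _ => x, fun _ => ν, PMF.tsum_coe _, ?_, fun _ => h, ?_⟩
  · intro s
    rw [ENNReal.tsum_mul_right, PMF.tsum_coe, one_mul]
  · intro s
    rw [ENNReal.tsum_mul_right, PMF.tsum_coe, one_mul]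

/-- A functional bisimulation gives simulation equivalence. -/
theorem simEquiv_of_map {α σ τ' : Type} (A : PAut α σ) (B : PAut α τ') (f : σ → τ')
    (hi : A.init.map f = B.init)
    (hf : ∀ x a μ, A.trans x a μ → B.trans (f x) a (μ.map f))
    (hb : ∀ x a ν, B.trans (f x) a ν → ∃ μ, A.trans x a μ ∧ μ.map f = ν)
    (hF : ∀ x, x ∈ A.final ↔ f x ∈ B.final) : SimEquiv A B := by
  constructor
  · refine ⟨fun x ν => ν = PMF.pure (f x), ⟨B.init, .refl, ?_⟩, ?_, ?_⟩
    · have := lift_map (fun x ν => ν = PMF.pure (f x)) A.init id f (fun _ => rfl)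
      rwa [PMF.map_id, hi] at this
    · rintro x a μ h _ rfl
      refine ⟨μ.map f, ⟨_, _, .refl, lift_pure _ _ _ (Or.inl (hf _ _ _ h)), .refl⟩, ?_⟩
      have := lift_map (fun x ν => ν = PMF.pure (f x)) μ id f (fun _ => rfl)
      rwa [PMF.map_id] at this
    · rintro x _ hx rfl
      refine ⟨_, .refl, ?_⟩
      intro y hy
      rw [PMF.support_pure, Set.mem_singleton_iff] at hy
      exact hy ▸ (hF x).1 hx
  · refine ⟨fun y ν => ∃ x, f x = y ∧ ν = PMF.pure x, ⟨A.init, .refl, ?_⟩, ?_, ?_⟩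
    · have := lift_map (fun y ν => ∃ x, f x = y ∧ ν = PMF.pure x) A.init f id
        (fun x => ⟨x, rfl, rfl⟩)
      rwa [PMF.map_id, hi] at this
    · rintro _ a ν h _ ⟨x, rfl, rfl⟩
      obtain ⟨μ, hμ, rfl⟩ := hb _ _ _ h
      refine ⟨μ, ⟨_, _, .refl, lift_pure _ _ _ (Or.inl hμ), .refl⟩, ?_⟩
      have := lift_map (fun y ν => ∃ x, f x = y ∧ ν = PMF.pure x) μ f id
        (fun x => ⟨x, rfl, rfl⟩)
      rwa [PMF.map_id] at this
    · rintro _ _ hx ⟨x, rfl, rfl⟩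
      refine ⟨_, .refl, ?_⟩
      intro y hy
      rw [PMF.support_pure, Set.mem_singleton_iff] at hy
      exact hy ▸ (hF x).2 hx

/-- The map merging the two copies of `R`. -/
def merge {σ₁ σ₂ σ₃ : Type} :
    Option ((σ₁ ⊕ σ₃) ⊕ (σ₂ ⊕ σ₃)) → Option (σ₁ ⊕ σ₂) ⊕ σ₃
  | none => Sum.inl none
  | some (Sum.inl (Sum.inl x)) => Sum.inl (some (Sum.inl x))
  | some (Sum.inl (Sum.inr r)) => Sum.inr r
  | some (Sum.inr (Sum.inl y)) => Sum.inl (some (Sum.inr y))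
  | some (Sum.inr (Sum.inr r)) => Sum.inr r

/-- sequential composition right-distributes over nondeterministic
choice up to simulation equivalence: `P · R + Q · R ≡ (P + Q) · R` (the two
occurrences of `R` on the left are disjoint copies). -/
theorem seq_right_distrib_nchoice {α σ₁ σ₂ σ₃ : Type}
    (P : PAut α σ₁) (Q : PAut α σ₂) (R : PAut α σ₃) :
    SimEquiv (nchoice (pseq P R) (pseq Q R)) (pseq (nchoice P Q) R) := by
  refine simEquiv_of_map _ _ merge ?_ ?_ ?_ ?_
  · simp [nchoice, pseq, PMF.pure_map, merge]
  · rintro (_ | (x | r) | (y | r)) a μ h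
    · obtain ⟨rfl, rfl | rfl⟩ := h
      · exact Or.inl ⟨_, ⟨rfl, Or.inl rfl⟩, by simp only [pseq, PMF.map_comp]; rfl⟩
      · exact Or.inl ⟨_, ⟨rfl, Or.inr rfl⟩, by simp only [pseq, PMF.map_comp]; rfl⟩
    · obtain ⟨_, ⟨μ, h, rfl⟩ | ⟨rfl, h, rfl⟩, rfl⟩ := h
      · exact Or.inl ⟨_, ⟨μ, h, rfl⟩, by simp only [PMF.map_comp]; rfl⟩
      · exact Or.inr ⟨rfl, Or.inl ⟨x, h, rfl⟩, by simp only [PMF.map_comp]; rfl⟩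
    · obtain ⟨_, ⟨μ, h, rfl⟩, rfl⟩ := h
      exact ⟨μ, h, by simp only [PMF.map_comp]; rfl⟩
    · obtain ⟨_, ⟨μ, h, rfl⟩ | ⟨rfl, h, rfl⟩, rfl⟩ := h
      · exact Or.inl ⟨_, ⟨μ, h, rfl⟩, by simp only [PMF.map_comp]; rfl⟩
      · exact Or.inr ⟨rfl, Or.inr ⟨y, h, rfl⟩, by simp only [PMF.map_comp]; rfl⟩
    · obtain ⟨_, ⟨μ, h, rfl⟩, rfl⟩ := h
      exact ⟨μ, h, by simp only [PMF.map_comp]; rfl⟩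
  · rintro (_ | (x | r) | (y | r)) a μ h
    · obtain ⟨_, ⟨rfl, rfl | rfl⟩, rfl⟩ | ⟨rfl, h, rfl⟩ := h
      · exact ⟨_, ⟨rfl, Or.inl rfl⟩, by simp only [pseq, PMF.map_comp]; rfl⟩
      · exact ⟨_, ⟨rfl, Or.inr rfl⟩, by simp only [pseq, PMF.map_comp]; rfl⟩
      · simp [nchoice] at h
    · obtain ⟨_, ⟨μ, h, rfl⟩, rfl⟩ | ⟨rfl, h, rfl⟩ := h
      · exact ⟨_, ⟨_, Or.inl ⟨μ, h, rfl⟩, rfl⟩, by simp only [PMF.map_comp]; rfl⟩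
      · have h' : x ∈ P.final := by simpa [nchoice] using h
        exact ⟨_, ⟨_, Or.inr ⟨rfl, h', rfl⟩, rfl⟩, by simp only [PMF.map_comp]; rfl⟩
    · obtain ⟨μ, h, rfl⟩ := h
      exact ⟨_, ⟨_, ⟨μ, h, rfl⟩, rfl⟩, by simp only [PMF.map_comp]; rfl⟩
    · obtain ⟨_, ⟨μ, h, rfl⟩, rfl⟩ | ⟨rfl, h, rfl⟩ := h
      · exact ⟨_, ⟨_, Or.inl ⟨μ, h, rfl⟩, rfl⟩, by simp only [PMF.map_comp]; rfl⟩
      · have h' : y ∈ Q.final := by simpa [nchoice] using h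
        exact ⟨_, ⟨_, Or.inr ⟨rfl, h', rfl⟩, rfl⟩, by simp only [PMF.map_comp]; rfl⟩
    · obtain ⟨μ, h, rfl⟩ := h
      exact ⟨_, ⟨_, ⟨μ, h, rfl⟩, rfl⟩, by simp only [PMF.map_comp]; rfl⟩
  · rintro (_ | (x | r) | (y | r)) <;> simp [nchoice, pseq, merge]

end PCKA
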